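/- arXiv:2508.03288 — 6 statements merged into one kernel-verified Lean document; each statement's English description precedes it below -/
import Mathlib

section
/- Let α ∈ ℝ and let ψ : ℝ → ℝ be differentiable with ψ(1) = 1, ψ(−1) = −1 and ψ'(1) = ψ'(−1) = 0. Let u : ℝ → ℝ be differentiable and define v(x) = ((1−α)·u(x) + ψ(x)·u(−x))/(1 + (1−α)²). Then v is differentiable and v'(1) − (1−α)·v'(−1) = −u'(−1). -/
/-!
At a critical point of `ψ` the product rule loses its `ψ'` term and the reflection `x ↦ -x`
contributes a sign, so there `(E(α,ψ)u)' = E(α,-ψ)u'`. The boundary identity for `v'` is thus an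
algebraic identity between the values of `E(α,-ψ)w`, with `w = u'`, at two opposite points: the two
`w(a)` terms cancel, and the `w(-a)` terms add up to `-(1 + (1 - α)²) w(-a)`, whose factor
`1 + (1 - α)²` is the normalisation of `E`.
-/

/-- The extension operator `E(α,ψ)` applied to `u`: a normalised combination of `u` and its
reflection, the latter multiplied by `ψ`. It takes the junk value `0` if `1 + (1 - α) ^ 2 = 0`,
which can happen over fields other than `ℝ`. -/
def reflectionExtension {K : Type*} [Field K] (α : K) (ψ u : K → K) (x : K) : K :=
  ((1 - α) * u x + ψ x * u (-x)) / (1 + (1 - α) ^ 2)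

theorem reflectionExtension_sub_mul_reflectionExtension_neg {K : Type*} [Field K] {α a : K}
    {φ : K → K} (hα : 1 + (1 - α) ^ 2 ≠ 0) (hφ : φ a = -1) (hφ_neg : φ (-a) = 1) (w : K → K) :
    reflectionExtension α φ w a - (1 - α) * reflectionExtension α φ w (-a) = -w (-a) := by
  simp only [reflectionExtension, hφ, hφ_neg, neg_neg]
  field_simp
  ring

section Derivative

variable {𝕜 : Type*} [NontriviallyNormedField 𝕜] {ψ u : 𝕜 → 𝕜} {x : 𝕜}

theorem hasDerivAt_reflectionExtension {ψ' u' u'_neg : 𝕜} (α : 𝕜) (hψ : HasDerivAt ψ ψ' x)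
    (hu : HasDerivAt u u' x) (hu_neg : HasDerivAt u u'_neg (-x)) :
    HasDerivAt (reflectionExtension α ψ u)
      (((1 - α) * u' + (ψ' * u (-x) + ψ x * -u'_neg)) / (1 + (1 - α) ^ 2)) x := by
  have hu_refl : HasDerivAt (fun y ↦ u (-y)) (-u'_neg) x := by
    simpa only [Function.comp_def, mul_neg_one] using hu_neg.comp x (hasDerivAt_neg x)
  exact ((hu.const_mul (1 - α)).add (hψ.mul hu_refl)).div_const _

theorem differentiable_reflectionExtension (α : 𝕜) (hψ : Differentiable 𝕜 ψ)
    (hu : Differentiable 𝕜 u) : Differentiable 𝕜 (reflectionExtension α ψ u) := fun x ↦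
  (hasDerivAt_reflectionExtension α (hψ x).hasDerivAt (hu x).hasDerivAt
    (hu (-x)).hasDerivAt).differentiableAt

theorem deriv_reflectionExtension_of_hasDerivAt_zero (α : 𝕜) (hψ : HasDerivAt ψ 0 x)
    (hu : DifferentiableAt 𝕜 u x) (hu_neg : DifferentiableAt 𝕜 u (-x)) :
    deriv (reflectionExtension α ψ u) x = reflectionExtension α (-ψ) (deriv u) x := by
  rw [(hasDerivAt_reflectionExtension α hψ hu.hasDerivAt hu_neg.hasDerivAt).deriv]
  simp [reflectionExtension]

theorem stmt1_general {α a : 𝕜} (hα : 1 + (1 - α) ^ 2 ≠ 0) (hψ : Differentiable 𝕜 ψ)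
    (hψa : ψ a = 1) (hψ_neg : ψ (-a) = -1) (hψ'a : deriv ψ a = 0) (hψ'_neg : deriv ψ (-a) = 0)
    (hu : Differentiable 𝕜 u) :
    Differentiable 𝕜 (reflectionExtension α ψ u) ∧
      deriv (reflectionExtension α ψ u) a - (1 - α) * deriv (reflectionExtension α ψ u) (-a) =
        -deriv u (-a) := by
  have deriv_eq {y : 𝕜} (hy : deriv ψ y = 0) :
      deriv (reflectionExtension α ψ u) y = reflectionExtension α (-ψ) (deriv u) y :=
    deriv_reflectionExtension_of_hasDerivAt_zero α (hy ▸ (hψ y).hasDerivAt) (hu y) (hu (-y))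
  refine ⟨differentiable_reflectionExtension α hψ hu, ?_⟩
  rw [deriv_eq hψ'a, deriv_eq hψ'_neg]
  exact reflectionExtension_sub_mul_reflectionExtension_neg hα (by simp [hψa])
    (by simp [hψ_neg]) (deriv u)

end Derivative

/-- Lemma 2.1 (extension theorem), second boundary identity:
for `v = E(α,ψ)u` one has `v'(1) − (1−α)·v'(−1) = −u'(−1)`. -/
theorem stmt1 (α : ℝ) (ψ : ℝ → ℝ) (hψdiff : Differentiable ℝ ψ)
    (hψ1 : ψ 1 = 1) (hψm1 : ψ (-1) = -1)
    (hψ'1 : deriv ψ 1 = 0) (hψ'm1 : deriv ψ (-1) = 0)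
    (u : ℝ → ℝ) (hu : Differentiable ℝ u) (v : ℝ → ℝ)
    (hv : ∀ x, v x = ((1 - α) * u x + ψ x * u (-x)) / (1 + (1 - α) ^ 2)) :
    Differentiable ℝ v ∧ deriv v 1 - (1 - α) * deriv v (-1) = -deriv u (-1) := by
  obtain rfl : v = reflectionExtension α ψ u := funext hv
  exact stmt1_general (by positivity) hψdiff hψ1 hψm1 hψ'1 hψ'm1 hu
end

section
/- Let θ, θ₀ ∈ ℝ and let ψ : ℝ → ℝ be differentiable with ψ(1) = 1, ψ(−1) = −1 and ψ'(1) = ψ'(−1) = 0. Let v : ℝ → ℝ be differentiable and satisfy the boundary conditions (1−θ)·v(1) − v(−1) = 0 and v'(1) − (1−θ)·v'(−1) = 0. Define ṽ(x) = v(x) − (θ − θ₀)·((1−θ₀)·v(x) + ψ(x)·v(−x))/(1 + (1−θ₀)²). Then ṽ satisfies the homogeneous boundary conditions with parameter θ₀: (1−θ₀)·ṽ(1) − ṽ(−1) = 0 and ṽ'(1) − (1−θ₀)·ṽ'(−1) = 0. -/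
/-!
For every differentiable `v`, the extension satisfies `B₁(θ₀; E v) = v(1)` and
`B₂(θ₀; E v) = -v'(-1)`. On the other hand, moving the parameter from `θ₀` to `θ` changes
`B₁(·; v)` by `-(θ - θ₀) v(1)` and `B₂(·; v)` by `(θ - θ₀) v'(-1)`. Hence subtracting
`(θ - θ₀) E v` from `v` has exactly the effect of that change: `Bᵢ(θ₀; ṽ) = Bᵢ(θ; v)`.
-/

section Values

variable {𝕜 F : Type*} [Field 𝕜] [AddCommGroup F] [Module 𝕜 F] {θ₀ : 𝕜} {ψ : 𝕜 → 𝕜}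

/-- The boundary operator `B₁(θ; φ)`, acting on the values of `φ` at `±1`. -/
def valueBoundaryOp (θ : 𝕜) (φ : 𝕜 → F) : F :=
  (1 - θ) • φ 1 - φ (-1)

/-- The extension operator `E(θ₀, ψ)`, which produces a function with prescribed boundary data
out of `v` and its reflection. It is meaningful only when `1 + (1 - θ₀) ^ 2 ≠ 0`. -/
noncomputable def boundaryExtension (θ₀ : 𝕜) (ψ : 𝕜 → 𝕜) (v : 𝕜 → F) (x : 𝕜) : F :=
  (1 + (1 - θ₀) ^ 2)⁻¹ • ((1 - θ₀) • v x + ψ x • v (-x))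

/-- The function `ṽ = v - (θ - θ₀) E(θ₀, ψ) v`, which carries boundary conditions with parameter
`θ` over to boundary conditions with parameter `θ₀`. -/
noncomputable def homogenization (θ θ₀ : 𝕜) (ψ : 𝕜 → 𝕜) (v : 𝕜 → F) : 𝕜 → F :=
  v - (θ - θ₀) • boundaryExtension θ₀ ψ v

theorem valueBoundaryOp_eq_sub_smul (θ θ₀ : 𝕜) (φ : 𝕜 → F) :
    valueBoundaryOp θ φ = valueBoundaryOp θ₀ φ - (θ - θ₀) • φ 1 := by
  unfold valueBoundaryOp
  module

theorem valueBoundaryOp_sub_smul (θ c : 𝕜) (φ χ : 𝕜 → F) :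
    valueBoundaryOp θ (φ - c • χ) = valueBoundaryOp θ φ - c • valueBoundaryOp θ χ := by
  simp only [valueBoundaryOp, Pi.sub_apply, Pi.smul_apply]
  module

theorem valueBoundaryOp_boundaryExtension (hθ₀ : 1 + (1 - θ₀) ^ 2 ≠ 0)
    (hψ : ψ 1 = 1) (hψ_neg : ψ (-1) = -1) (v : 𝕜 → F) :
    valueBoundaryOp θ₀ (boundaryExtension θ₀ ψ v) = v 1 := by
  simp only [valueBoundaryOp, boundaryExtension, hψ, hψ_neg, neg_neg]
  match_scalars <;> field_simp <;> ring

theorem valueBoundaryOp_homogenization (θ : 𝕜) (hθ₀ : 1 + (1 - θ₀) ^ 2 ≠ 0)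
    (hψ : ψ 1 = 1) (hψ_neg : ψ (-1) = -1) (v : 𝕜 → F) :
    valueBoundaryOp θ₀ (homogenization θ θ₀ ψ v) = valueBoundaryOp θ v := by
  rw [homogenization, valueBoundaryOp_sub_smul,
    valueBoundaryOp_boundaryExtension hθ₀ hψ hψ_neg, ← valueBoundaryOp_eq_sub_smul]

end Values

section Derivatives

variable {𝕜 F : Type*} [NontriviallyNormedField 𝕜] [NormedAddCommGroup F] [NormedSpace 𝕜 F]
  {θ₀ : 𝕜} {ψ : 𝕜 → 𝕜} {v : 𝕜 → F}

/-- The boundary operator `B₂(θ; φ)`, acting on the derivatives of `φ` at `±1`. It is meaningful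
only when `φ` is differentiable there, since `deriv` is `0` otherwise. -/
noncomputable def derivBoundaryOp (θ : 𝕜) (φ : 𝕜 → F) : F :=
  deriv φ 1 - (1 - θ) • deriv φ (-1)

theorem derivBoundaryOp_eq_add_smul (θ θ₀ : 𝕜) (φ : 𝕜 → F) :
    derivBoundaryOp θ φ = derivBoundaryOp θ₀ φ + (θ - θ₀) • deriv φ (-1) := by
  unfold derivBoundaryOp
  module

theorem derivBoundaryOp_sub_smul (θ c : 𝕜) {φ χ : 𝕜 → F}
    (hφ : DifferentiableAt 𝕜 φ 1) (hφ_neg : DifferentiableAt 𝕜 φ (-1))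
    (hχ : DifferentiableAt 𝕜 χ 1) (hχ_neg : DifferentiableAt 𝕜 χ (-1)) :
    derivBoundaryOp θ (φ - c • χ) = derivBoundaryOp θ φ - c • derivBoundaryOp θ χ := by
  simp only [derivBoundaryOp, deriv_sub hφ (hχ.const_smul c),
    deriv_sub hφ_neg (hχ_neg.const_smul c), deriv_const_smul c hχ, deriv_const_smul c hχ_neg]
  module

theorem hasDerivAt_boundaryExtension (θ₀ : 𝕜) {ψ' x : 𝕜} {v' v'_neg : F}
    (hψ : HasDerivAt ψ ψ' x) (hv : HasDerivAt v v' x) (hv_neg : HasDerivAt v v'_neg (-x)) :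
    HasDerivAt (boundaryExtension θ₀ ψ v)
      ((1 + (1 - θ₀) ^ 2)⁻¹ • ((1 - θ₀) • v' + (ψ x • -v'_neg + ψ' • v (-x)))) x := by
  have hv_reflect : HasDerivAt (fun y ↦ v (-y)) (-v'_neg) x := by
    simpa only [Function.comp_def, neg_smul, one_smul] using hv_neg.scomp x (hasDerivAt_neg x)
  exact ((hv.const_smul (1 - θ₀)).add (hψ.smul hv_reflect)).const_smul _

theorem derivBoundaryOp_boundaryExtension (hθ₀ : 1 + (1 - θ₀) ^ 2 ≠ 0)
    (hψ : ψ 1 = 1) (hψ_neg : ψ (-1) = -1)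
    (hψ' : HasDerivAt ψ 0 1) (hψ'_neg : HasDerivAt ψ 0 (-1))
    (hv : DifferentiableAt 𝕜 v 1) (hv_neg : DifferentiableAt 𝕜 v (-1)) :
    derivBoundaryOp θ₀ (boundaryExtension θ₀ ψ v) = -deriv v (-1) := by
  have hv_neg_neg : HasDerivAt v (deriv v 1) (- -1) := by
    simpa only [neg_neg] using hv.hasDerivAt
  rw [derivBoundaryOp,
    (hasDerivAt_boundaryExtension θ₀ hψ' hv.hasDerivAt hv_neg.hasDerivAt).deriv,
    (hasDerivAt_boundaryExtension θ₀ hψ'_neg hv_neg.hasDerivAt hv_neg_neg).deriv, hψ, hψ_neg]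
  match_scalars <;> field_simp <;> ring

theorem derivBoundaryOp_homogenization (θ : 𝕜) (hθ₀ : 1 + (1 - θ₀) ^ 2 ≠ 0)
    (hψ : ψ 1 = 1) (hψ_neg : ψ (-1) = -1)
    (hψ' : HasDerivAt ψ 0 1) (hψ'_neg : HasDerivAt ψ 0 (-1))
    (hv : DifferentiableAt 𝕜 v 1) (hv_neg : DifferentiableAt 𝕜 v (-1)) :
    derivBoundaryOp θ₀ (homogenization θ θ₀ ψ v) = derivBoundaryOp θ v := by
  have hv_neg_neg : DifferentiableAt 𝕜 v (- -1) := by rwa [neg_neg]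
  have hE := hasDerivAt_boundaryExtension θ₀ hψ' hv.hasDerivAt hv_neg.hasDerivAt
  have hE_neg := hasDerivAt_boundaryExtension θ₀ hψ'_neg hv_neg.hasDerivAt hv_neg_neg.hasDerivAt
  rw [homogenization, derivBoundaryOp_sub_smul _ _ hv hv_neg hE.differentiableAt
      hE_neg.differentiableAt,
    derivBoundaryOp_boundaryExtension hθ₀ hψ hψ_neg hψ' hψ'_neg hv hv_neg,
    smul_neg, sub_neg_eq_add, ← derivBoundaryOp_eq_add_smul]

theorem stmt9_general (θ : 𝕜) (hθ₀ : 1 + (1 - θ₀) ^ 2 ≠ 0)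
    (hψ : ψ 1 = 1) (hψ_neg : ψ (-1) = -1)
    (hψ' : HasDerivAt ψ 0 1) (hψ'_neg : HasDerivAt ψ 0 (-1))
    (hv : DifferentiableAt 𝕜 v 1) (hv_neg : DifferentiableAt 𝕜 v (-1)) :
    valueBoundaryOp θ₀ (homogenization θ θ₀ ψ v) = valueBoundaryOp θ v ∧
      derivBoundaryOp θ₀ (homogenization θ θ₀ ψ v) = derivBoundaryOp θ v :=
  ⟨valueBoundaryOp_homogenization θ hθ₀ hψ hψ_neg v,
    derivBoundaryOp_homogenization θ hθ₀ hψ hψ_neg hψ' hψ'_neg hv hv_neg⟩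

end Derivatives

theorem homogenization_apply_real (θ θ₀ : ℝ) (ψ v : ℝ → ℝ) (x : ℝ) :
    homogenization θ θ₀ ψ v x =
      v x - (θ - θ₀) * (((1 - θ₀) * v x + ψ x * v (-x)) / (1 + (1 - θ₀) ^ 2)) := by
  simp only [homogenization, boundaryExtension, Pi.sub_apply, Pi.smul_apply, smul_eq_mul,
    div_eq_inv_mul]

/-- Homogenization of the FK-type boundary conditions (Section 2): if `v`
satisfies `B₁(θ;v) = B₂(θ;v) = 0`, then `ṽ = v − (θ−θ₀)E(θ₀,ψ)v` satisfies
`B₁(θ₀;ṽ) = B₂(θ₀;ṽ) = 0`. -/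
theorem stmt9 (θ θ₀ : ℝ) (ψ : ℝ → ℝ) (hψdiff : Differentiable ℝ ψ)
    (hψ1 : ψ 1 = 1) (hψm1 : ψ (-1) = -1)
    (hψ'1 : deriv ψ 1 = 0) (hψ'm1 : deriv ψ (-1) = 0)
    (v : ℝ → ℝ) (hvdiff : Differentiable ℝ v)
    (hb1 : (1 - θ) * v 1 - v (-1) = 0)
    (hb2 : deriv v 1 - (1 - θ) * deriv v (-1) = 0)
    (w : ℝ → ℝ)
    (hw : ∀ x, w x
      = v x - (θ - θ₀) * (((1 - θ₀) * v x + ψ x * v (-x)) / (1 + (1 - θ₀) ^ 2))) :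
    (1 - θ₀) * w 1 - w (-1) = 0 ∧ deriv w 1 - (1 - θ₀) * deriv w (-1) = 0 := by
  obtain rfl : w = homogenization θ θ₀ ψ v :=
    funext fun x ↦ (hw x).trans (homogenization_apply_real θ θ₀ ψ v x).symm
  have hψ' : HasDerivAt ψ 0 1 := hψ'1 ▸ (hψdiff 1).hasDerivAt
  have hψ'_neg : HasDerivAt ψ 0 (-1) := hψ'm1 ▸ (hψdiff (-1)).hasDerivAt
  exact (stmt9_general θ (by positivity) hψ1 hψm1 hψ' hψ'_neg (hvdiff 1) (hvdiff (-1))).imp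
    (·.trans hb1) (·.trans hb2)
end

section
/- Let q ∈ [1,∞), θ₀ ∈ (0,1], and let a < b be real numbers. Let φ : ℝ → ℝ be continuously differentiable on [a,b] and satisfy the boundary condition (1−θ₀)·φ(b) − φ(a) = 0. Then (∫_a^b |φ(x)|^q dx)^{1/q} ≤ (b−a)·((1+θ₀)/θ₀)·(∫_a^b |φ'(x)|^q dx)^{1/q}. -/
/-!
By the fundamental theorem of calculus the oscillation of `φ` on `[a, b]` is at most `‖φ'‖₁`. The
coupling says `θ₀ • φ b = φ b - φ a`, so the endpoint value itself satisfies
`‖φ b‖ ≤ ‖θ₀‖⁻¹ * ‖φ'‖₁`, and therefore `‖φ‖ ≤ (1 + ‖θ₀‖⁻¹) * ‖φ'‖₁` on all of `[a, b]`.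
Passing from the supremum to `‖φ‖_q` costs `(b - a) ^ (1 / q)`, and passing from `‖φ'‖₁` to
`‖φ'‖_q` by Hölder's inequality costs `(b - a) ^ (1 - 1 / q)`.
-/

open MeasureTheory Set
open scoped ENNReal

section MeasureSpace

variable {α E F : Type*} [MeasurableSpace α] {μ : Measure α} [NormedAddCommGroup E]
  [NormedAddCommGroup F]

theorem eLpNorm_le_mul_eLpNorm_of_ae_enorm_le_mul_eLpNorm_one {f : α → E} {g : α → F} {C p : ℝ≥0∞}
    (hp : 1 ≤ p) (hg : AEStronglyMeasurable g μ) (hfg : ∀ᵐ x ∂μ, ‖f x‖ₑ ≤ C * eLpNorm g 1 μ) :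
    eLpNorm f p μ ≤ μ univ * C * eLpNorm g p μ := by
  have inv_le_one : p.toReal⁻¹ ≤ 1 := by
    simpa using ENNReal.toReal_mono ENNReal.one_ne_top (ENNReal.inv_le_one.2 hp)
  have holder : eLpNorm g 1 μ ≤ eLpNorm g p μ * μ univ ^ (1 - p.toReal⁻¹) := by
    simpa using eLpNorm_le_eLpNorm_mul_rpow_measure_univ hp hg
  have rpow_mul_rpow : μ univ ^ (1 - p.toReal⁻¹) * μ univ ^ p.toReal⁻¹ = μ univ := by
    rw [← ENNReal.rpow_add_of_nonneg _ _ (sub_nonneg.2 inv_le_one) (by positivity),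
      sub_add_cancel, ENNReal.rpow_one]
  calc eLpNorm f p μ
    _ ≤ C * eLpNorm g 1 μ * μ univ ^ p.toReal⁻¹ := eLpNorm_le_of_ae_enorm_bound hfg
    _ ≤ C * (eLpNorm g p μ * μ univ ^ (1 - p.toReal⁻¹)) * μ univ ^ p.toReal⁻¹ := by gcongr
    _ = C * eLpNorm g p μ * (μ univ ^ (1 - p.toReal⁻¹) * μ univ ^ p.toReal⁻¹) := by ring
    _ = μ univ * C * eLpNorm g p μ := by rw [rpow_mul_rpow]; ring

theorem memLp_restrict_of_continuousOn_of_isCompact [TopologicalSpace α] [OpensMeasurableSpace α]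
    [TopologicalSpace.PseudoMetrizableSpace α] [IsFiniteMeasureOnCompacts μ] {f : α → E} {s : Set α}
    (hf : ContinuousOn f s) (hs : IsCompact s) (hsm : MeasurableSet s) (p : ℝ≥0∞) :
    MemLp f p (μ.restrict s) := by
  have : IsFiniteMeasure (μ.restrict s) := isFiniteMeasure_restrict.2 hs.measure_ne_top
  obtain ⟨C, hC⟩ := hs.exists_bound_of_continuousOn hf
  exact .of_bound (hf.aestronglyMeasurable_of_isCompact hs hsm) C (ae_restrict_of_forall_mem hsm hC)

end MeasureSpace

section Interval

variable {E : Type*} [NormedAddCommGroup E] {a b : ℝ} {f f' : ℝ → E}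

theorem integral_norm_rpow_rpow_one_div_eq_lpNorm {q : ℝ} (hq : 0 < q) (hab : a ≤ b)
    (hf : AEStronglyMeasurable f (volume.restrict (Ioc a b))) :
    (∫ x in a..b, ‖f x‖ ^ q) ^ (1 / q) =
      lpNorm f (ENNReal.ofReal q) (volume.restrict (Ioc a b)) := by
  rw [lpNorm_eq_integral_norm_rpow_toReal (by simpa using hq) ENNReal.ofReal_ne_top hf,
    ENNReal.toReal_ofReal hq.le, intervalIntegral.integral_of_le hab, one_div]

variable [NormedSpace ℝ E]

theorem enorm_sub_le_eLpNorm_one_of_hasDerivAt (hab : a ≤ b) (hf : ContinuousOn f (Icc a b))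
    (hderiv : ∀ x ∈ Ioo a b, HasDerivAt f (f' x) x)
    (hf' : AEStronglyMeasurable f' (volume.restrict (Ioc a b))) :
    ‖f b - f a‖ₑ ≤ eLpNorm f' 1 (volume.restrict (Ioc a b)) := by
  by_cases hint : Integrable f' (volume.restrict (Ioc a b))
  · have norm_le : ‖f b - f a‖ ≤ ∫ x in a..b, ‖f' x‖ :=
      norm_sub_le_integral_of_norm_deriv_le_of_le hab hf
        (fun x hx ↦ (hderiv x hx).differentiableAt.differentiableWithinAt)
        (.of_forall fun x hx ↦ (congrArg norm (hderiv x hx).deriv).le)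
        ((intervalIntegrable_iff_integrableOn_Ioc_of_le hab).2 hint.norm)
    rw [intervalIntegral.integral_of_le hab] at norm_le
    rw [eLpNorm_one_eq_lintegral_enorm, ← ofReal_integral_norm_eq_lintegral_enorm hint,
      ← ofReal_norm]
    exact ENNReal.ofReal_le_ofReal norm_le
  · have : eLpNorm f' 1 (volume.restrict (Ioc a b)) = ∞ := by
      by_contra h
      exact hint (memLp_one_iff_integrable.1 ⟨hf', lt_top_iff_ne_top.2 h⟩)
    simp [this]

theorem enorm_right_sub_le_eLpNorm_one_of_hasDerivAt {x : ℝ} (hx : x ∈ Icc a b)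
    (hf : ContinuousOn f (Icc a b)) (hderiv : ∀ y ∈ Ioo a b, HasDerivAt f (f' y) y)
    (hf' : AEStronglyMeasurable f' (volume.restrict (Ioc a b))) :
    ‖f b - f x‖ₑ ≤ eLpNorm f' 1 (volume.restrict (Ioc a b)) := by
  have restrict_le : volume.restrict (Ioc x b) ≤ volume.restrict (Ioc a b) :=
    Measure.restrict_mono_set _ (Ioc_subset_Ioc_left hx.1)
  calc ‖f b - f x‖ₑ
    _ ≤ eLpNorm f' 1 (volume.restrict (Ioc x b)) :=
      enorm_sub_le_eLpNorm_one_of_hasDerivAt hx.2 (hf.mono (Icc_subset_Icc_left hx.1))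
        (fun y hy ↦ hderiv y (Ioo_subset_Ioo_left hx.1 hy)) (hf'.mono_measure restrict_le)
    _ ≤ eLpNorm f' 1 (volume.restrict (Ioc a b)) := eLpNorm_mono_measure f' restrict_le

variable {𝕜 : Type*} [NormedField 𝕜] [NormedSpace 𝕜 E] {θ : 𝕜}

theorem enorm_le_mul_eLpNorm_one_of_coupling (hθ : θ ≠ 0) {x : ℝ} (hx : x ∈ Icc a b)
    (hf : ContinuousOn f (Icc a b)) (hderiv : ∀ y ∈ Ioo a b, HasDerivAt f (f' y) y)
    (hf' : AEStronglyMeasurable f' (volume.restrict (Ioc a b)))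
    (hbc : (1 - θ) • f b - f a = 0) :
    ‖f x‖ₑ ≤ (1 + ‖θ⁻¹‖ₑ) * eLpNorm f' 1 (volume.restrict (Ioc a b)) := by
  have osc_le {y : ℝ} (hy : y ∈ Icc a b) :=
    enorm_right_sub_le_eLpNorm_one_of_hasDerivAt hy hf hderiv hf'
  have endpoint_eq : f b = θ⁻¹ • (f b - f a) := by
    rw [← sub_eq_zero.1 hbc, sub_smul, one_smul, sub_sub_cancel, inv_smul_smul₀ hθ]
  have endpoint_le : ‖f b‖ₑ ≤ ‖θ⁻¹‖ₑ * eLpNorm f' 1 (volume.restrict (Ioc a b)) := by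
    rw [endpoint_eq, enorm_smul]
    gcongr
    exact osc_le (left_mem_Icc.2 (hx.1.trans hx.2))
  calc ‖f x‖ₑ
    _ = ‖f b - (f b - f x)‖ₑ := by rw [sub_sub_cancel]
    _ ≤ ‖f b‖ₑ + ‖f b - f x‖ₑ := enorm_sub_le
    _ ≤ ‖θ⁻¹‖ₑ * eLpNorm f' 1 (volume.restrict (Ioc a b)) +
        eLpNorm f' 1 (volume.restrict (Ioc a b)) := add_le_add endpoint_le (osc_le hx)
    _ = (1 + ‖θ⁻¹‖ₑ) * eLpNorm f' 1 (volume.restrict (Ioc a b)) := by ring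

theorem eLpNorm_le_mul_eLpNorm_of_coupling {p : ℝ≥0∞} (hp : 1 ≤ p) (hθ : θ ≠ 0)
    (hf : ContinuousOn f (Icc a b)) (hderiv : ∀ x ∈ Ioo a b, HasDerivAt f (f' x) x)
    (hf' : AEStronglyMeasurable f' (volume.restrict (Ioc a b)))
    (hbc : (1 - θ) • f b - f a = 0) :
    eLpNorm f p (volume.restrict (Ioc a b)) ≤
      ENNReal.ofReal (b - a) * (1 + ‖θ⁻¹‖ₑ) * eLpNorm f' p (volume.restrict (Ioc a b)) := by
  have pointwise : ∀ᵐ x ∂volume.restrict (Ioc a b),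
      ‖f x‖ₑ ≤ (1 + ‖θ⁻¹‖ₑ) * eLpNorm f' 1 (volume.restrict (Ioc a b)) :=
    ae_restrict_of_forall_mem measurableSet_Ioc fun x hx ↦
      enorm_le_mul_eLpNorm_one_of_coupling hθ (Ioc_subset_Icc_self hx) hf hderiv hf' hbc
  simpa using eLpNorm_le_mul_eLpNorm_of_ae_enorm_le_mul_eLpNorm_one hp hf' pointwise

theorem lpNorm_le_mul_lpNorm_of_coupling {p : ℝ≥0∞} (hp : 1 ≤ p) (hθ : θ ≠ 0) (hab : a ≤ b)
    (hf : ContinuousOn f (Icc a b)) (hderiv : ∀ x ∈ Ioo a b, HasDerivAt f (f' x) x)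
    (hf' : MemLp f' p (volume.restrict (Ioc a b)))
    (hbc : (1 - θ) • f b - f a = 0) :
    lpNorm f p (volume.restrict (Ioc a b)) ≤
      (b - a) * ((1 + ‖θ‖) / ‖θ‖) * lpNorm f' p (volume.restrict (Ioc a b)) := by
  have constant_eq : (1 + ‖θ‖) / ‖θ‖ = (1 + ‖θ⁻¹‖ₑ).toReal := by
    rw [ENNReal.toReal_add ENNReal.one_ne_top enorm_ne_top, toReal_enorm, norm_inv]
    have : ‖θ‖ ≠ 0 := norm_ne_zero_iff.2 hθ
    simp [field, add_comm]
  have hfm : AEStronglyMeasurable f (volume.restrict (Ioc a b)) :=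
    (hf.mono Ioc_subset_Icc_self).aestronglyMeasurable measurableSet_Ioc
  have eLpNorm_le := ENNReal.toReal_mono (by finiteness [hf'.eLpNorm_ne_top])
    (eLpNorm_le_mul_eLpNorm_of_coupling hp hθ hf hderiv hf'.aestronglyMeasurable hbc)
  simpa only [ENNReal.toReal_mul, ENNReal.toReal_ofReal (sub_nonneg.2 hab), toReal_eLpNorm hfm,
    toReal_eLpNorm hf'.aestronglyMeasurable, constant_eq] using eLpNorm_le

theorem stmt10_general {q : ℝ} (hq : 1 ≤ q) (hθ : θ ≠ 0) (hab : a ≤ b)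
    (hf : ContinuousOn f (Icc a b)) (hderiv : ∀ x ∈ Ioo a b, HasDerivAt f (f' x) x)
    (hf' : MemLp f' (ENNReal.ofReal q) (volume.restrict (Ioc a b)))
    (hbc : (1 - θ) • f b - f a = 0) :
    (∫ x in a..b, ‖f x‖ ^ q) ^ (1 / q) ≤
      (b - a) * ((1 + ‖θ‖) / ‖θ‖) * (∫ x in a..b, ‖f' x‖ ^ q) ^ (1 / q) := by
  have hq_pos : 0 < q := zero_lt_one.trans_le hq
  rw [integral_norm_rpow_rpow_one_div_eq_lpNorm hq_pos hab
      ((hf.mono Ioc_subset_Icc_self).aestronglyMeasurable measurableSet_Ioc),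
    integral_norm_rpow_rpow_one_div_eq_lpNorm hq_pos hab hf'.aestronglyMeasurable]
  exact lpNorm_le_mul_lpNorm_of_coupling (ENNReal.one_le_ofReal.2 hq) hθ hab hf hderiv hf' hbc

end Interval

/-- Lemma 3.1 (one-dimensional Poincaré-type inequality): if
`(1−θ₀)φ(b) − φ(a) = 0` then
`‖φ‖_{L^q(a,b)} ≤ (b−a)·((1+θ₀)/θ₀)·‖φ'‖_{L^q(a,b)}`. -/
theorem stmt10 (q : ℝ) (hq : 1 ≤ q) (θ₀ : ℝ) (hθ₀ : θ₀ ∈ Set.Ioc (0 : ℝ) 1)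
    (a b : ℝ) (hab : a < b) (φ φ' : ℝ → ℝ)
    (hderiv : ∀ x ∈ Set.Icc a b, HasDerivAt φ (φ' x) x)
    (hcont : ContinuousOn φ' (Set.Icc a b))
    (hbc : (1 - θ₀) * φ b - φ a = 0) :
    (∫ x in a..b, |φ x| ^ q) ^ (1 / q)
      ≤ (b - a) * ((1 + θ₀) / θ₀) * (∫ x in a..b, |φ' x| ^ q) ^ (1 / q) := by
  have hmem : MemLp φ' (ENNReal.ofReal q) (volume.restrict (Icc a b)) :=
    memLp_restrict_of_continuousOn_of_isCompact hcont isCompact_Icc measurableSet_Icc _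
  simpa [abs_of_pos hθ₀.1] using stmt10_general hq hθ₀.1.ne' hab.le (HasDerivAt.continuousOn hderiv)
    (fun x hx ↦ hderiv x (Ioo_subset_Icc_self hx))
    (hmem.mono_measure (Measure.restrict_mono_set _ Ioc_subset_Icc_self)) hbc
end

section
/- Let θ ∈ ℝ and let u, v : ℝ → ℝ be twice continuously differentiable on [−1,1], both satisfying the boundary conditions (1−θ)·u(1) = u(−1), u'(1) = (1−θ)·u'(−1), and (1−θ)·v(1) = v(−1), v'(1) = (1−θ)·v'(−1). Then ∫_{−1}^{1} u''(x)·v(x) dx = ∫_{−1}^{1} u(x)·v''(x) dx. -/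
/-!
Integrating by parts twice, the two integrals differ by the increment of `u' v - u v'` over the
interval (Green's second identity). The boundary conditions transport `u` and `u'` between the
endpoints by reciprocal factors: `u a = c u b` while `u' b = c u' a`. The factors cancel in the
products `u' v` and `u v'`, which therefore take the same values at both endpoints.
-/

open MeasureTheory Set
open scoped Interval

section GreenIdentity

variable {A : Type*} [NormedRing A] [NormedAlgebra ℝ A] [CompleteSpace A]
  {a b : ℝ} {u u' u'' v v' v'' : ℝ → A}

theorem integral_deriv_deriv_mul_sub_integral_mul_deriv_deriv
    (hu : ∀ x ∈ [[a, b]], HasDerivWithinAt u (u' x) [[a, b]] x)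
    (hu' : ∀ x ∈ [[a, b]], HasDerivWithinAt u' (u'' x) [[a, b]] x)
    (hu'' : IntervalIntegrable u'' volume a b)
    (hv : ∀ x ∈ [[a, b]], HasDerivWithinAt v (v' x) [[a, b]] x)
    (hv' : ∀ x ∈ [[a, b]], HasDerivWithinAt v' (v'' x) [[a, b]] x)
    (hv'' : IntervalIntegrable v'' volume a b) :
    (∫ x in a..b, u'' x * v x) - ∫ x in a..b, u x * v'' x =
      (u' b * v b - u' a * v a) - (u b * v' b - u a * v' a) := by
  have hu'_int : IntervalIntegrable u' volume a b :=
    ContinuousOn.intervalIntegrable fun x hx ↦ (hu' x hx).continuousWithinAt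
  have hv'_int : IntervalIntegrable v' volume a b :=
    ContinuousOn.intervalIntegrable fun x hx ↦ (hv' x hx).continuousWithinAt
  have parts_u'_v : ∫ x in a..b, u' x * v' x =
      u' b * v b - u' a * v a - ∫ x in a..b, u'' x * v x :=
    intervalIntegral.integral_mul_deriv_eq_deriv_mul_of_hasDerivWithinAt hu' hv hu'' hv'_int
  have parts_u_v' : ∫ x in a..b, u x * v'' x =
      u b * v' b - u a * v' a - ∫ x in a..b, u' x * v' x :=
    intervalIntegral.integral_mul_deriv_eq_deriv_mul_of_hasDerivWithinAt hu hv' hu'_int hv''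
  rw [parts_u_v', parts_u'_v]
  abel

theorem stmt13_general {R : Type*} [SMul R A] [IsScalarTower R A A] [SMulCommClass R A A] (c : R)
    (hu : ∀ x ∈ [[a, b]], HasDerivWithinAt u (u' x) [[a, b]] x)
    (hu' : ∀ x ∈ [[a, b]], HasDerivWithinAt u' (u'' x) [[a, b]] x)
    (hu'' : IntervalIntegrable u'' volume a b)
    (hv : ∀ x ∈ [[a, b]], HasDerivWithinAt v (v' x) [[a, b]] x)
    (hv' : ∀ x ∈ [[a, b]], HasDerivWithinAt v' (v'' x) [[a, b]] x)
    (hv'' : IntervalIntegrable v'' volume a b)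
    (hu_bdry : c • u b = u a) (hu'_bdry : u' b = c • u' a)
    (hv_bdry : c • v b = v a) (hv'_bdry : v' b = c • v' a) :
    ∫ x in a..b, u'' x * v x = ∫ x in a..b, u x * v'' x := by
  have u'_mul_v : u' b * v b = u' a * v a := by
    rw [hu'_bdry, ← hv_bdry, smul_mul_assoc, mul_smul_comm]
  have u_mul_v' : u b * v' b = u a * v' a := by
    rw [hv'_bdry, ← hu_bdry, smul_mul_assoc, mul_smul_comm]
  rw [← sub_eq_zero,
    integral_deriv_deriv_mul_sub_integral_mul_deriv_deriv hu hu' hu'' hv hv' hv'',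
    u'_mul_v, u_mul_v', sub_self, sub_self, sub_self]

end GreenIdentity

/-- Symmetry identity underlying self-adjointness of `−∂ₓ²` with FK-type
boundary conditions: `∫_{−1}^{1} u''·v = ∫_{−1}^{1} u·v''`. -/
theorem stmt13 (θ : ℝ) (u u' u'' v v' v'' : ℝ → ℝ)
    (hu' : ∀ x ∈ Set.Icc (-1 : ℝ) 1, HasDerivAt u (u' x) x)
    (hu'' : ∀ x ∈ Set.Icc (-1 : ℝ) 1, HasDerivAt u' (u'' x) x)
    (hucont : ContinuousOn u'' (Set.Icc (-1 : ℝ) 1))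
    (hv' : ∀ x ∈ Set.Icc (-1 : ℝ) 1, HasDerivAt v (v' x) x)
    (hv'' : ∀ x ∈ Set.Icc (-1 : ℝ) 1, HasDerivAt v' (v'' x) x)
    (hvcont : ContinuousOn v'' (Set.Icc (-1 : ℝ) 1))
    (hub1 : (1 - θ) * u 1 = u (-1))
    (hub2 : u' 1 = (1 - θ) * u' (-1))
    (hvb1 : (1 - θ) * v 1 = v (-1))
    (hvb2 : v' 1 = (1 - θ) * v' (-1)) :
    (∫ x in (-1 : ℝ)..1, u'' x * v x) = ∫ x in (-1 : ℝ)..1, u x * v'' x := by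
  rw [← uIcc_of_le (by norm_num : (-1 : ℝ) ≤ 1)] at hu' hu'' hucont hv' hv'' hvcont
  exact stmt13_general (1 - θ)
    (fun x hx ↦ (hu' x hx).hasDerivWithinAt) (fun x hx ↦ (hu'' x hx).hasDerivWithinAt)
    hucont.intervalIntegrable
    (fun x hx ↦ (hv' x hx).hasDerivWithinAt) (fun x hx ↦ (hv'' x hx).hasDerivWithinAt)
    hvcont.intervalIntegrable hub1 hub2 hvb1 hvb2
end

section
/- Let θ₀ ∈ (0,1] and λ ∈ ℂ. Suppose u : ℝ → ℂ is twice continuously differentiable on [−1,1], is not identically zero on [−1,1], satisfies u''(x) = λ·u(x) for all x ∈ [−1,1], and satisfies the boundary conditions (1−θ₀)·u(1) = u(−1) and u'(1) = (1−θ₀)·u'(−1). Then λ is a real number and λ ≤ −θ₀²/(4(1+θ₀)²) < 0. -/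
/-!
Pairing `u'' = l • u` with `u` and integrating by parts gives `l ∫ ‖u‖² = -∫ ‖u'‖²`: the conditions
`κ • u b = u a` and `u' b = conj κ • u' a` are adjoint to each other, so the boundary terms cancel.
Hence `l` is real and `-l` is the Rayleigh quotient of `u`. Its lower bound is a Poincaré
inequality: `(1 - κ) • u x = (u x - u a) + κ • (u b - u x)` and both increments are integrals of
`u'`, so `‖1 - κ‖ ‖u x‖ ≤ max 1 ‖κ‖ ∫ ‖u'‖`, and Cauchy-Schwarz passes from `L¹` to `L²`. The
FK-type conditions are the case `κ = 1 - θ₀`.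
-/

open Set MeasureTheory intervalIntegral
open scoped InnerProductSpace ComplexConjugate

theorem sq_intervalIntegral_le {f : ℝ → ℝ} {a b : ℝ} (hab : a ≤ b)
    (hf : IntervalIntegrable f volume a b)
    (hf_sq : IntervalIntegrable (fun x ↦ f x ^ 2) volume a b) :
    (∫ x in a..b, f x) ^ 2 ≤ (b - a) * ∫ x in a..b, f x ^ 2 := by
  rcases hab.eq_or_lt with rfl | hlt
  · simp
  have jensen : (⨍ x in a..b, f x) ^ 2 ≤ ⨍ x in a..b, f x ^ 2 :=
    even_two.convexOn_pow.map_set_average_le (by fun_prop) isClosed_univ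
      (by simpa [hab] using hlt) (by simp [hab]) (by simp) hf.def' hf_sq.def'
  have hba : 0 < b - a := sub_pos.2 hlt
  rw [interval_average_eq_div, interval_average_eq_div, div_pow, div_le_div_iff₀ (by positivity)
    hba] at jensen
  refine le_of_mul_le_mul_right ?_ hba
  linarith

section Poincare

variable {E : Type*} [NormedAddCommGroup E] [NormedSpace ℝ E] {u u' : ℝ → E} {a b : ℝ}

theorem norm_sub_le_integral_norm_of_hasDerivWithinAt (hab : a ≤ b)
    (hu : ∀ x ∈ Icc a b, HasDerivWithinAt u (u' x) (Icc a b) x)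
    (hu' : IntervalIntegrable u' volume a b) :
    ‖u b - u a‖ ≤ ∫ x in a..b, ‖u' x‖ := by
  have hasDerivAt_u : ∀ x ∈ Ioo a b, HasDerivAt u (u' x) x := fun x hx ↦
    (hu x (Ioo_subset_Icc_self hx)).hasDerivAt (Icc_mem_nhds hx.1 hx.2)
  refine norm_sub_le_integral_of_norm_deriv_le_of_le hab (HasDerivWithinAt.continuousOn hu)
    (fun x hx ↦ (hasDerivAt_u x hx).differentiableAt.differentiableWithinAt) ?_ hu'.norm
  exact .of_forall fun x hx ↦ (congrArg norm (hasDerivAt_u x hx).deriv).le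

variable {𝕜 : Type*} [NormedField 𝕜] [NormedSpace 𝕜 E] {κ : 𝕜}

theorem norm_one_sub_mul_norm_le_integral_norm_deriv
    (hu : ∀ x ∈ Icc a b, HasDerivWithinAt u (u' x) (Icc a b) x)
    (hu' : IntervalIntegrable u' volume a b) (hbc : κ • u b = u a) {x : ℝ} (hx : x ∈ Icc a b) :
    ‖1 - κ‖ * ‖u x‖ ≤ max 1 ‖κ‖ * ∫ y in a..b, ‖u' y‖ := by
  have left_subset : Icc a x ⊆ Icc a b := Icc_subset_Icc_right hx.2
  have right_subset : Icc x b ⊆ Icc a b := Icc_subset_Icc_left hx.1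
  have hab : a ≤ b := hx.1.trans hx.2
  have hu'_left : IntervalIntegrable u' volume a x := hu'.mono_set <| by
    simpa only [uIcc_of_le hx.1, uIcc_of_le hab] using left_subset
  have hu'_right : IntervalIntegrable u' volume x b := hu'.mono_set <| by
    simpa only [uIcc_of_le hx.2, uIcc_of_le hab] using right_subset
  have left_increment : ‖u x - u a‖ ≤ ∫ y in a..x, ‖u' y‖ :=
    norm_sub_le_integral_norm_of_hasDerivWithinAt hx.1
      (fun y hy ↦ (hu y (left_subset hy)).mono left_subset) hu'_left
  have right_increment : ‖u b - u x‖ ≤ ∫ y in x..b, ‖u' y‖ :=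
    norm_sub_le_integral_norm_of_hasDerivWithinAt hx.2
      (fun y hy ↦ (hu y (right_subset hy)).mono right_subset) hu'_right
  calc ‖1 - κ‖ * ‖u x‖ = ‖(u x - u a) + κ • (u b - u x)‖ := by
        rw [← norm_smul, smul_sub, hbc, sub_smul, one_smul, sub_add_sub_cancel]
    _ ≤ ‖u x - u a‖ + ‖κ‖ * ‖u b - u x‖ := (norm_add_le _ _).trans_eq (by rw [norm_smul])
    _ ≤ max 1 ‖κ‖ * ‖u x - u a‖ + max 1 ‖κ‖ * ‖u b - u x‖ := by
        gcongr
        · exact le_mul_of_one_le_left (norm_nonneg _) (le_max_left _ _)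
        · exact le_max_right _ _
    _ ≤ max 1 ‖κ‖ * (∫ y in a..x, ‖u' y‖) + max 1 ‖κ‖ * ∫ y in x..b, ‖u' y‖ := by gcongr
    _ = max 1 ‖κ‖ * ∫ y in a..b, ‖u' y‖ := by
        rw [← mul_add, integral_add_adjacent_intervals hu'_left.norm hu'_right.norm]

theorem poincare_of_smul_eq (hab : a ≤ b)
    (hu : ∀ x ∈ Icc a b, HasDerivWithinAt u (u' x) (Icc a b) x)
    (hu' : IntervalIntegrable u' volume a b)
    (hu'_sq : IntervalIntegrable (fun x ↦ ‖u' x‖ ^ 2) volume a b) (hbc : κ • u b = u a) :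
    ‖1 - κ‖ ^ 2 * ∫ x in a..b, ‖u x‖ ^ 2 ≤
      ((b - a) * max 1 ‖κ‖) ^ 2 * ∫ x in a..b, ‖u' x‖ ^ 2 := by
  have : 0 ≤ b - a := sub_nonneg.2 hab
  have hu_sq : IntervalIntegrable (fun x ↦ ‖u x‖ ^ 2) volume a b :=
    ((HasDerivWithinAt.continuousOn hu).norm.pow 2).intervalIntegrable_of_Icc hab
  have pointwise : ∀ x ∈ Icc a b,
      ‖1 - κ‖ ^ 2 * ‖u x‖ ^ 2 ≤ max 1 ‖κ‖ ^ 2 * (∫ y in a..b, ‖u' y‖) ^ 2 := fun x hx ↦ by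
    rw [← mul_pow, ← mul_pow]
    exact pow_le_pow_left₀ (by positivity)
      (norm_one_sub_mul_norm_le_integral_norm_deriv hu hu' hbc hx) 2
  calc ‖1 - κ‖ ^ 2 * ∫ x in a..b, ‖u x‖ ^ 2
      = ∫ x in a..b, ‖1 - κ‖ ^ 2 * ‖u x‖ ^ 2 := (intervalIntegral.integral_const_mul _ _).symm
    _ ≤ ∫ _ in a..b, max 1 ‖κ‖ ^ 2 * (∫ y in a..b, ‖u' y‖) ^ 2 :=
        integral_mono_on hab (hu_sq.const_mul _) intervalIntegrable_const pointwise
    _ = (b - a) * (max 1 ‖κ‖ ^ 2 * (∫ y in a..b, ‖u' y‖) ^ 2) := by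
        rw [intervalIntegral.integral_const, smul_eq_mul]
    _ ≤ (b - a) * (max 1 ‖κ‖ ^ 2 * ((b - a) * ∫ y in a..b, ‖u' y‖ ^ 2)) := by
        gcongr
        exact sq_intervalIntegral_le hab hu'.norm hu'_sq
    _ = ((b - a) * max 1 ‖κ‖) ^ 2 * ∫ y in a..b, ‖u' y‖ ^ 2 := by ring

end Poincare

section Eigenvalue

variable {𝕜 E : Type*} [RCLike 𝕜] [NormedAddCommGroup E] [InnerProductSpace 𝕜 E]
  [NormedSpace ℝ E] {u u' v v' : ℝ → E} {a b : ℝ} {κ l : 𝕜}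

theorem integral_inner_deriv_add_inner_deriv (hab : a ≤ b)
    (hu : ∀ x ∈ Icc a b, HasDerivWithinAt u (u' x) (Icc a b) x)
    (hv : ∀ x ∈ Icc a b, HasDerivWithinAt v (v' x) (Icc a b) x)
    (hu' : ContinuousOn u' (Icc a b)) (hv' : ContinuousOn v' (Icc a b)) :
    ∫ x in a..b, (⟪u x, v' x⟫_𝕜 + ⟪u' x, v x⟫_𝕜) = ⟪u b, v b⟫_𝕜 - ⟪u a, v a⟫_𝕜 := by
  have hcont_u : ContinuousOn u (Icc a b) := HasDerivWithinAt.continuousOn hu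
  have hcont_v : ContinuousOn v (Icc a b) := HasDerivWithinAt.continuousOn hv
  have hcont_deriv : ContinuousOn (fun x ↦ ⟪u x, v' x⟫_𝕜 + ⟪u' x, v x⟫_𝕜) (Icc a b) :=
    (hcont_u.inner hv').add (hu'.inner hcont_v)
  refine integral_eq_sub_of_hasDerivAt_of_le hab (hcont_u.inner hcont_v) (fun x hx ↦ ?_)
    (hcont_deriv.intervalIntegrable_of_Icc hab)
  have hx' : x ∈ Icc a b := Ioo_subset_Icc_self hx
  exact ((hu x hx').inner 𝕜 (hv x hx')).hasDerivAt (Icc_mem_nhds hx.1 hx.2)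

theorem eigenvalue_mul_integral_norm_sq (hab : a ≤ b)
    (hu : ∀ x ∈ Icc a b, HasDerivWithinAt u (u' x) (Icc a b) x)
    (hu' : ∀ x ∈ Icc a b, HasDerivWithinAt u' (l • u x) (Icc a b) x)
    (hbc : κ • u b = u a) (hbc' : u' b = conj κ • u' a) :
    l * ((∫ x in a..b, ‖u x‖ ^ 2 : ℝ) : 𝕜) = -((∫ x in a..b, ‖u' x‖ ^ 2 : ℝ) : 𝕜) := by
  have hcont_u : ContinuousOn u (Icc a b) := HasDerivWithinAt.continuousOn hu
  have hcont_u' : ContinuousOn u' (Icc a b) := HasDerivWithinAt.continuousOn hu'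
  have integrable_norm_sq (w : ℝ → E) (hw : ContinuousOn w (Icc a b)) :
      IntervalIntegrable (fun x ↦ ((‖w x‖ ^ 2 : ℝ) : 𝕜)) volume a b :=
    (RCLike.continuous_ofReal.comp_continuousOn (hw.norm.pow 2)).intervalIntegrable_of_Icc hab
  have boundary : ⟪u b, u' b⟫_𝕜 - ⟪u a, u' a⟫_𝕜 = 0 := by
    rw [hbc', ← hbc, inner_smul_right, inner_smul_left, sub_self]
  rw [eq_neg_iff_add_eq_zero, ← boundary,
    ← integral_inner_deriv_add_inner_deriv hab hu hu' hcont_u' (hcont_u.const_smul l),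
    ← RCLike.intervalIntegral_ofReal, ← RCLike.intervalIntegral_ofReal,
    ← intervalIntegral.integral_const_mul,
    ← intervalIntegral.integral_add ((integrable_norm_sq u hcont_u).const_mul l)
      (integrable_norm_sq u' hcont_u')]
  simp only [inner_smul_right, inner_self_eq_norm_sq_to_K, RCLike.ofReal_pow]

theorem stmt14_general (hab : a < b)
    (hu : ∀ x ∈ Icc a b, HasDerivWithinAt u (u' x) (Icc a b) x)
    (hu' : ∀ x ∈ Icc a b, HasDerivWithinAt u' (l • u x) (Icc a b) x)
    (hne : ∃ x ∈ Icc a b, u x ≠ 0)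
    (hbc : κ • u b = u a) (hbc' : u' b = conj κ • u' a) :
    RCLike.im l = 0 ∧ RCLike.re l ≤ -(‖1 - κ‖ / ((b - a) * max 1 ‖κ‖)) ^ 2 := by
  have : 0 < b - a := sub_pos.2 hab
  have hcont_u' : ContinuousOn u' (Icc a b) := HasDerivWithinAt.continuousOn hu'
  have integral_pos_u : 0 < ∫ x in a..b, ‖u x‖ ^ 2 := by
    obtain ⟨c, hc, huc⟩ := hne
    exact integral_pos hab ((HasDerivWithinAt.continuousOn hu).norm.pow 2)
      (fun x _ ↦ by positivity) ⟨c, hc, by positivity⟩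
  have rayleigh := eigenvalue_mul_integral_norm_sq hab.le hu hu' hbc hbc'
  have rayleigh_re : RCLike.re l * ∫ x in a..b, ‖u x‖ ^ 2 = -∫ x in a..b, ‖u' x‖ ^ 2 := by
    simpa only [RCLike.re_mul_ofReal, map_neg, RCLike.ofReal_re] using congrArg RCLike.re rayleigh
  have rayleigh_im : RCLike.im l * ∫ x in a..b, ‖u x‖ ^ 2 = 0 := by
    simpa only [RCLike.im_mul_ofReal, map_neg, RCLike.ofReal_im, neg_zero]
      using congrArg RCLike.im rayleigh
  have poincare := poincare_of_smul_eq hab.le hu (hcont_u'.intervalIntegrable_of_Icc hab.le)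
    ((hcont_u'.norm.pow 2).intervalIntegrable_of_Icc hab.le) hbc
  refine ⟨(mul_eq_zero.1 rayleigh_im).resolve_right integral_pos_u.ne', ?_⟩
  rw [div_pow, ← neg_div, le_div_iff₀ (by positivity)]
  refine le_of_mul_le_mul_right ?_ integral_pos_u
  linear_combination poincare + ((b - a) * max 1 ‖κ‖) ^ 2 * rayleigh_re

end Eigenvalue

/-- Spectral claim in the proof of Lemma 3.3: every eigenvalue `λ` of `∂ₓ²`
with FK-type boundary conditions is real and satisfies
`λ ≤ −θ₀²/(4(1+θ₀)²) < 0`. -/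
theorem stmt14 (θ₀ : ℝ) (hθ₀ : θ₀ ∈ Set.Ioc (0 : ℝ) 1) (l : ℂ) (u u' u'' : ℝ → ℂ)
    (hu' : ∀ x ∈ Set.Icc (-1 : ℝ) 1, HasDerivAt u (u' x) x)
    (hu'' : ∀ x ∈ Set.Icc (-1 : ℝ) 1, HasDerivAt u' (u'' x) x)
    (hcont : ContinuousOn u'' (Set.Icc (-1 : ℝ) 1))
    (hne : ∃ x ∈ Set.Icc (-1 : ℝ) 1, u x ≠ 0)
    (heq : ∀ x ∈ Set.Icc (-1 : ℝ) 1, u'' x = l * u x)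
    (hb1 : (1 - (θ₀ : ℂ)) * u 1 = u (-1))
    (hb2 : u' 1 = (1 - (θ₀ : ℂ)) * u' (-1)) :
    l.im = 0 ∧ l.re ≤ -θ₀ ^ 2 / (4 * (1 + θ₀) ^ 2) ∧
      -θ₀ ^ 2 / (4 * (1 + θ₀) ^ 2) < 0 := by
  obtain ⟨hpos, -⟩ := hθ₀
  have norm_le : ‖1 - (θ₀ : ℂ)‖ ≤ 1 + θ₀ := by
    simpa [abs_of_pos hpos] using norm_sub_le (1 : ℂ) θ₀
  obtain ⟨im_eq, re_le⟩ := stmt14_general (κ := 1 - (θ₀ : ℂ)) (by norm_num)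
    (fun x hx ↦ (hu' x hx).hasDerivWithinAt)
    (fun x hx ↦ (heq x hx ▸ hu'' x hx).hasDerivWithinAt) hne hb1 (by simpa using hb2)
  refine ⟨im_eq, re_le.trans ?_,
    div_neg_of_neg_of_pos (by simpa using pow_pos hpos 2) (by positivity)⟩
  calc -(‖1 - (1 - (θ₀ : ℂ))‖ / ((1 - -1) * max 1 ‖1 - (θ₀ : ℂ)‖)) ^ 2
      ≤ -(θ₀ / (2 * (1 + θ₀))) ^ 2 := by
        rw [sub_sub_cancel, Complex.norm_of_nonneg hpos.le, sub_neg_eq_add, one_add_one_eq_two]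
        gcongr
        exact max_le (by linarith) norm_le
    _ = -θ₀ ^ 2 / (4 * (1 + θ₀) ^ 2) := by rw [div_pow, mul_pow, neg_div]; norm_num
end

section
/- Let θ₀ ∈ (0,1] and μ ∈ ℂ with μ ≠ 0. If ((1−θ₀)e^{μ} − e^{−μ})² + (e^{μ} − (1−θ₀)e^{−μ})² = 0, then μ² is a real number and μ² < 0. -/
/-!
With `a = 1 - θ₀`, the determinant equals `2 * ((1 + a ^ 2) * cosh (2 * μ) - 2 * a)`, so it
vanishes exactly when `cosh (2 * μ) = 2 * a / (1 + a ^ 2)`. The right-hand side is a real number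
in `[-1, 1]`, i.e. the cosine of a real angle, and `cosh` takes such values only on the imaginary
axis.
-/

section CosineValues

variable {z : ℂ} {c : ℝ}

lemma im_eq_zero_of_cos_eq_ofReal (hc : c ∈ Set.Icc (-1 : ℝ) 1) (hz : Complex.cos z = c) :
    z.im = 0 := by
  have hcos : Complex.cos (Real.arccos c : ℂ) = Complex.cos z := by
    rw [← Complex.ofReal_cos, Real.cos_arccos hc.1 hc.2, hz]
  obtain ⟨k, rfl | rfl⟩ := Complex.cos_eq_cos_iff.mp hcos <;> simp

lemma re_eq_zero_of_cosh_eq_ofReal (hc : c ∈ Set.Icc (-1 : ℝ) 1) (hz : Complex.cosh z = c) :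
    z.re = 0 := by
  rw [← Complex.cos_mul_I] at hz
  simpa using im_eq_zero_of_cos_eq_ofReal hc hz

end CosineValues

lemma two_mul_div_one_add_sq_mem_Icc (a : ℝ) : 2 * a / (1 + a ^ 2) ∈ Set.Icc (-1 : ℝ) 1 := by
  have hpos : 0 < 1 + a ^ 2 := by positivity
  constructor
  · rw [le_div_iff₀ hpos]
    linarith [sq_nonneg (1 + a)]
  · rw [div_le_one hpos]
    linarith [sq_nonneg (1 - a)]

lemma boundary_determinant_eq_cosh (a μ : ℂ) :
    (a * Complex.exp μ - Complex.exp (-μ)) ^ 2 + (Complex.exp μ - a * Complex.exp (-μ)) ^ 2 =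
      2 * ((1 + a ^ 2) * Complex.cosh (2 * μ) - 2 * a) := by
  have hexp : Complex.exp μ * Complex.exp (-μ) = 1 := by
    rw [← Complex.exp_add, add_neg_cancel, Complex.exp_zero]
  have hcosh : 2 * Complex.cosh (2 * μ) = Complex.exp μ ^ 2 + Complex.exp (-μ) ^ 2 := by
    rw [Complex.two_cosh, ← mul_neg, ← Complex.exp_nat_mul, ← Complex.exp_nat_mul, Nat.cast_ofNat]
  linear_combination -(1 + a ^ 2) * hcosh - 4 * a * hexp

lemma re_eq_zero_of_boundary_determinant_eq_zero {a : ℝ} {μ : ℂ}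
    (h : (a * Complex.exp μ - Complex.exp (-μ)) ^ 2 +
      (Complex.exp μ - a * Complex.exp (-μ)) ^ 2 = 0) :
    μ.re = 0 := by
  have hne : (1 + a ^ 2 : ℂ) ≠ 0 := by
    exact_mod_cast (by positivity : (0 : ℝ) < 1 + a ^ 2).ne'
  have hcosh : Complex.cosh (2 * μ) = (2 * a / (1 + a ^ 2) : ℝ) := by
    rw [boundary_determinant_eq_cosh] at h
    push_cast
    rw [eq_div_iff hne]
    linear_combination h / 2
  simpa using re_eq_zero_of_cosh_eq_ofReal (two_mul_div_one_add_sq_mem_Icc a) hcosh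

lemma sq_im_eq_zero_and_sq_re_neg {z : ℂ} (hre : z.re = 0) (hz : z ≠ 0) :
    (z ^ 2).im = 0 ∧ (z ^ 2).re < 0 := by
  have him : z.im ≠ 0 := fun him => hz (Complex.ext hre him)
  simpa [pow_two, hre] using him

theorem stmt17_general (θ₀ : ℝ) (μ : ℂ) (hμ : μ ≠ 0)
    (hM : ((1 - (θ₀ : ℂ)) * Complex.exp μ - Complex.exp (-μ)) ^ 2
        + (Complex.exp μ - (1 - (θ₀ : ℂ)) * Complex.exp (-μ)) ^ 2 = 0) :
    (μ ^ 2).im = 0 ∧ (μ ^ 2).re < 0 := by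
  have hre : μ.re = 0 :=
    re_eq_zero_of_boundary_determinant_eq_zero (a := 1 - θ₀) (by exact_mod_cast hM)
  exact sq_im_eq_zero_and_sq_re_neg hre hμ

/-- Zeros of the boundary determinant (Lemma 3.3): if `θ₀ ∈ (0,1]`, `μ ≠ 0`
and `M(μ²) = 0`, then `λ = μ²` is negative real. -/
theorem stmt17 (θ₀ : ℝ) (hθ₀ : θ₀ ∈ Set.Ioc (0 : ℝ) 1) (μ : ℂ) (hμ : μ ≠ 0)
    (hM : ((1 - (θ₀ : ℂ)) * Complex.exp μ - Complex.exp (-μ)) ^ 2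
        + (Complex.exp μ - (1 - (θ₀ : ℂ)) * Complex.exp (-μ)) ^ 2 = 0) :
    (μ ^ 2).im = 0 ∧ (μ ^ 2).re < 0 :=
  stmt17_general θ₀ μ hμ hM
end
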